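/- arXiv:1807.05209 — 5 statements merged into one kernel-verified Lean document; each statement's English description precedes it below -/
import Mathlib

section
/- For all natural numbers n and k with 1 ≤ k ≤ n/2, the sum ∑_{i=0}^{k} C(n,i) of binomial coefficients satisfies ∑_{i=0}^{k} C(n,i) ≤ 2^{H(k/n)·n}, where H is the binary entropy function. -/
/-- The binary entropy function `H(ε) = -(ε log₂ ε + (1-ε) log₂ (1-ε))`
(with the convention `H(0) = H(1) = 0`, which holds automatically since
`Real.logb 2 0 = 0`). -/
noncomputable def binH (ε : ℝ) : ℝ :=
  -(ε * Real.logb 2 ε + (1 - ε) * Real.logb 2 (1 - ε))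

theorem rpow_mul_logb_self_mul {b p : ℝ} (hb : 0 < b) (hb1 : b ≠ 1) (hp : 0 ≤ p) (x : ℝ) :
    b ^ (p * Real.logb b p * x) = p ^ (p * x) := by
  rcases hp.eq_or_lt with rfl | hp
  · simp
  · rw [mul_comm p, mul_assoc, Real.rpow_mul hb.le, Real.rpow_logb hb hb1 hp]

theorem two_rpow_neg_binH_mul {p : ℝ} (hp0 : 0 ≤ p) (hp1 : p ≤ 1) (x : ℝ) :
    (2 : ℝ) ^ (-(binH p * x)) = p ^ (p * x) * (1 - p) ^ ((1 - p) * x) := by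
  rw [binH, neg_mul, neg_neg, add_mul, Real.rpow_add two_pos,
    rpow_mul_logb_self_mul two_pos (by norm_num) hp0,
    rpow_mul_logb_self_mul two_pos (by norm_num) (sub_nonneg.2 hp1)]

theorem rpow_mul_rpow_sub_le_of_le {a b r s t : ℝ} (ha : 0 ≤ a) (hab : a ≤ b)
    (hr : 0 ≤ r) (hrs : r ≤ s) (hst : s ≤ t) :
    a ^ s * b ^ (t - s) ≤ a ^ r * b ^ (t - r) := by
  have hb : 0 ≤ b := ha.trans hab
  have hsr : 0 ≤ s - r := sub_nonneg.2 hrs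
  calc a ^ s * b ^ (t - s) = a ^ r * (a ^ (s - r) * b ^ (t - s)) := by
        rw [← mul_assoc, ← Real.rpow_add_of_nonneg ha hr hsr, add_sub_cancel]
    _ ≤ a ^ r * (b ^ (s - r) * b ^ (t - s)) := by gcongr
    _ = a ^ r * b ^ (t - r) := by
        rw [← Real.rpow_add_of_nonneg hb hsr (sub_nonneg.2 hst), sub_add_sub_cancel']

theorem sum_choose_mul_rpow_mul_rpow_sub_le_add_pow {a b s : ℝ} {n k : ℕ} (ha : 0 ≤ a)
    (hab : a ≤ b) (hks : k ≤ s) (hsn : s ≤ n) :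
    (∑ i ∈ Finset.range (k + 1), (n.choose i : ℝ)) * (a ^ s * b ^ (n - s)) ≤ (a + b) ^ n := by
  have hb : 0 ≤ b := ha.trans hab
  have hkn : k ≤ n := by exact_mod_cast hks.trans hsn
  have weight_le {i : ℕ} (hi : i ≤ k) : a ^ s * b ^ (n - s) ≤ a ^ i * b ^ (n - i) := by
    have his : (i : ℝ) ≤ s := (Nat.cast_le.2 hi).trans hks
    simpa only [← Nat.cast_sub (hi.trans hkn), Real.rpow_natCast] using
      rpow_mul_rpow_sub_le_of_le ha hab i.cast_nonneg his hsn
  calc (∑ i ∈ Finset.range (k + 1), (n.choose i : ℝ)) * (a ^ s * b ^ (n - s))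
    _ = ∑ i ∈ Finset.range (k + 1), a ^ s * b ^ (n - s) * n.choose i := by
        rw [mul_comm, Finset.mul_sum]
    _ ≤ ∑ i ∈ Finset.range (k + 1), a ^ i * b ^ (n - i) * n.choose i := by
        gcongr ∑ i ∈ _, ?_ * _ with i hi
        exact weight_le (Finset.mem_range_succ_iff.1 hi)
    _ ≤ ∑ i ∈ Finset.range (n + 1), a ^ i * b ^ (n - i) * n.choose i := by
        gcongr
    _ = (a + b) ^ n := (add_pow a b n).symm

/-- Toss `n` coins of bias `p`. As `p ≤ 1 - p`, every outcome with at most `p * n` heads has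
probability at least `p ^ (p * n) * (1 - p) ^ ((1 - p) * n) = 2 ^ (-(binH p * n))`, and the total
probability of these outcomes is at most `1`. -/
theorem sum_choose_le_two_rpow_entropy_general {n k : ℕ} {p : ℝ} (hp0 : 0 ≤ p) (hp : p ≤ 1 / 2)
    (hk : k ≤ p * n) :
    (∑ i ∈ Finset.range (k + 1), (n.choose i : ℝ)) ≤ (2 : ℝ) ^ (binH p * n) := by
  have hp1 : p ≤ 1 := by linarith
  have hpn : p * n ≤ n := mul_le_of_le_one_left n.cast_nonneg hp1
  have tail_le_one : (∑ i ∈ Finset.range (k + 1), (n.choose i : ℝ)) *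
      2 ^ (-(binH p * n)) ≤ 1 := by
    simpa only [two_rpow_neg_binH_mul hp0 hp1, add_sub_cancel, one_pow, one_sub_mul] using
      sum_choose_mul_rpow_mul_rpow_sub_le_add_pow hp0 (show p ≤ 1 - p by linarith) hk hpn
  rwa [Real.rpow_neg zero_le_two, mul_inv_le_iff₀ (by positivity), one_mul] at tail_le_one

/-- For all `n, k` with `1 ≤ k ≤ n/2`, `∑_{i=0}^{k} C(n,i) ≤ 2^{H(k/n)·n}`. -/
theorem sum_choose_le_two_rpow_entropy (n k : ℕ) (hk1 : 1 ≤ k) (hk2 : (k : ℝ) ≤ n / 2) :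
    (∑ i ∈ Finset.range (k + 1), (n.choose i : ℝ)) ≤
      (2 : ℝ) ^ (binH ((k : ℝ) / n) * n) := by
  have hn : (0 : ℝ) < n := by linarith [show (1 : ℝ) ≤ k from mod_cast hk1]
  exact sum_choose_le_two_rpow_entropy_general (by positivity)
    ((div_le_iff₀ hn).2 (by linarith)) (div_mul_cancel₀ _ hn.ne').ge
end

section
/- If C ⊆ 𝒮 is a minimum set cover of U and P is a partial cover of C, then f(U,𝒮) = f(P,𝒮) + f(U∖P,𝒮). -/
/-- `coverNum 𝒮 X` is the minimum cardinality of a subcollection `T ⊆ 𝒮`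
whose union covers `X`. -/
noncomputable def coverNum {α : Type*} [DecidableEq α]
    (𝒮 : Finset (Finset α)) (X : Finset α) : ℕ :=
  sInf {m | ∃ T ⊆ 𝒮, X ⊆ T.sup id ∧ T.card = m}

theorem finset_sup_sdiff_sup_le {ι β : Type*} [DecidableEq ι] [GeneralizedCoheytingAlgebra β]
    (s t : Finset ι) (f : ι → β) : s.sup f \ t.sup f ≤ (s \ t).sup f := by
  rw [sdiff_le_iff, ← Finset.sup_union, Finset.union_sdiff_self_eq_union]
  exact Finset.sup_mono Finset.subset_union_right

section coverNum

variable {α : Type*} [DecidableEq α] {𝒮 T C C' : Finset (Finset α)} {X Y U : Finset α}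

theorem coverNum_le_card (hT : T ⊆ 𝒮) (hX : X ⊆ T.sup id) : coverNum 𝒮 X ≤ T.card :=
  Nat.sInf_le ⟨T, hT, hX, rfl⟩

theorem exists_card_eq_coverNum (hX : X ⊆ 𝒮.sup id) :
    ∃ T ⊆ 𝒮, X ⊆ T.sup id ∧ T.card = coverNum 𝒮 X :=
  Nat.sInf_mem (s := {m | ∃ T ⊆ 𝒮, X ⊆ T.sup id ∧ T.card = m}) ⟨_, 𝒮, subset_rfl, hX, rfl⟩

theorem coverNum_mono (hXY : X ⊆ Y) (hY : Y ⊆ 𝒮.sup id) : coverNum 𝒮 X ≤ coverNum 𝒮 Y := by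
  obtain ⟨T, hT, hYT, hcard⟩ := exists_card_eq_coverNum hY
  exact hcard ▸ coverNum_le_card hT (hXY.trans hYT)

theorem coverNum_union_le (hX : X ⊆ 𝒮.sup id) (hY : Y ⊆ 𝒮.sup id) :
    coverNum 𝒮 (X ∪ Y) ≤ coverNum 𝒮 X + coverNum 𝒮 Y := by
  obtain ⟨A, hA, hXA, hcardA⟩ := exists_card_eq_coverNum hX
  obtain ⟨B, hB, hYB, hcardB⟩ := exists_card_eq_coverNum hY
  have hcover : X ∪ Y ⊆ (A ∪ B).sup id := by
    rw [Finset.sup_union]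
    exact Finset.union_subset_union hXA hYB
  calc coverNum 𝒮 (X ∪ Y)
      ≤ (A ∪ B).card := coverNum_le_card (Finset.union_subset hA hB) hcover
    _ ≤ A.card + B.card := Finset.card_union_le A B
    _ = coverNum 𝒮 X + coverNum 𝒮 Y := by rw [hcardA, hcardB]

theorem coverNum_le_coverNum_add_coverNum_sdiff (hU : U ⊆ 𝒮.sup id) (hX : X ⊆ 𝒮.sup id) :
    coverNum 𝒮 U ≤ coverNum 𝒮 X + coverNum 𝒮 (U \ X) := by
  have hdiff : U \ X ⊆ 𝒮.sup id := Finset.sdiff_subset.trans hU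
  calc coverNum 𝒮 U
      ≤ coverNum 𝒮 (X ∪ U \ X) :=
        coverNum_mono le_sup_sdiff (Finset.union_subset hX hdiff)
    _ ≤ coverNum 𝒮 X + coverNum 𝒮 (U \ X) := coverNum_union_le hX hdiff

theorem coverNum_sup_add_coverNum_sdiff_sup_le_card (hC : C ⊆ 𝒮) (hU : U ⊆ C.sup id)
    (hC' : C' ⊆ C) :
    coverNum 𝒮 (C'.sup id) + coverNum 𝒮 (U \ C'.sup id) ≤ C.card := by
  have hrest : U \ C'.sup id ⊆ (C \ C').sup id :=
    (Finset.sdiff_subset_sdiff hU subset_rfl).trans (finset_sup_sdiff_sup_le C C' id)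
  calc coverNum 𝒮 (C'.sup id) + coverNum 𝒮 (U \ C'.sup id)
      ≤ C'.card + (C \ C').card :=
        add_le_add (coverNum_le_card (hC'.trans hC) subset_rfl)
          (coverNum_le_card (Finset.sdiff_subset.trans hC) hrest)
    _ = C.card := by rw [add_comm, Finset.card_sdiff_add_card_eq_card hC']

theorem coverNum_eq_partialCover_add_general (hC : C ⊆ 𝒮) (hU : U ⊆ C.sup id)
    (hmin : C.card = coverNum 𝒮 U) (hC' : C' ⊆ C) :
    coverNum 𝒮 U = coverNum 𝒮 (C'.sup id) + coverNum 𝒮 (U \ C'.sup id) :=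
  le_antisymm
    (coverNum_le_coverNum_add_coverNum_sdiff (hU.trans (Finset.sup_mono hC))
      (Finset.sup_mono (hC'.trans hC)))
    (hmin ▸ coverNum_sup_add_coverNum_sdiff_sup_le_card hC hU hC')

end coverNum

/-- If `C ⊆ 𝒮` is a minimum set cover of `U` and `P` is a partial cover of `C`
(the union of some subcollection `C' ⊆ C`), then `f(U,𝒮) = f(P,𝒮) + f(U∖P,𝒮)`. -/
theorem coverNum_eq_partialCover_add {α : Type*} [DecidableEq α]
    (U : Finset α) (𝒮 : Finset (Finset α)) (h𝒮 : ∀ S ∈ 𝒮, S ⊆ U)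
    (C : Finset (Finset α)) (hC : C ⊆ 𝒮) (hCcov : U ⊆ C.sup id)
    (hCmin : C.card = coverNum 𝒮 U)
    (C' : Finset (Finset α)) (hC' : C' ⊆ C) (P : Finset α) (hP : P = C'.sup id) :
    coverNum 𝒮 U = coverNum 𝒮 P + coverNum 𝒮 (U \ P) := by
  subst hP
  exact coverNum_eq_partialCover_add_general hC hCcov hCmin hC'
end

section
/- For every subset S ⊆ V, all distinct u, v ∈ S, and every integer k with 2 ≤ k ≤ |S| − 1: f(S,u,v) = min over all X ⊆ S with |X| = k, u ∈ X, v ∉ X, and all t ∈ X∖{u}, of ( f(X,u,t) + f((S∖X) ∪ {t}, t, v) ). -/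
/-- The total weight of a walk given as a list of vertices: the sum of `w`
over consecutive pairs. -/
def pathCost {α : Type*} (w : α → α → ℕ∞) : List α → ℕ∞
  | [] => 0
  | [_] => 0
  | a :: b :: l => w a b + pathCost w (b :: l)

/-- `minPath w S u v` is the minimum, over all sequences listing each element of `S`
exactly once that start at `u` and end at `v`, of the sum of `w` over consecutive
pairs; it is `⊤` if no such sequence exists. -/
noncomputable def minPath {α : Type*} [DecidableEq α]
    (w : α → α → ℕ∞) (S : Finset α) (u v : α) : ℕ∞ :=
  sInf {c | ∃ l : List α, l.Nodup ∧ l.toFinset = S ∧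
      l.head? = some u ∧ l.getLast? = some v ∧ c = pathCost w l}

/-!
Cutting a Hamiltonian path of `S` at its `k`-th vertex `t` yields a Hamiltonian path of the set `X`
of its first `k` vertices and one of `(S \ X) ∪ {t}`, and the cost is additive under this cut.
Conversely, a Hamiltonian path of `X` ending at `t` and one of `Y` starting at `t` glue to a
Hamiltonian path of `X ∪ Y` as soon as `X` and `Y` meet only in `t`.
-/

theorem pathCost_append_cons {α : Type*} (w : α → α → ℕ∞) (t : α) (b : List α) :
    ∀ a : List α, pathCost w (a ++ t :: b) = pathCost w (a ++ [t]) + pathCost w (t :: b)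
  | [] => by simp [pathCost]
  | [x] => by simp [pathCost]
  | x :: y :: a => by
    have ih := pathCost_append_cons w t b (y :: a)
    simp only [List.cons_append, pathCost] at ih ⊢
    rw [ih, add_assoc]

section HamiltonianPath

variable {α : Type*} [DecidableEq α] {S X Y : Finset α} {u v t : α} {l a b : List α}

/-- The list `l` enumerates `S` without repetition, starting at `u` and ending at `v`; these are the
sequences over which `minPath` minimizes. All consecutive pairs are allowed, an absent edge being
one of weight `⊤`. -/
structure IsHamiltonianPath (S : Finset α) (u v : α) (l : List α) : Prop where
  nodup : l.Nodup
  toFinset_eq : l.toFinset = S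
  head?_eq : l.head? = some u
  getLast?_eq : l.getLast? = some v

namespace IsHamiltonianPath

theorem head_mem (h : IsHamiltonianPath S u v l) : u ∈ S := by
  rw [← h.toFinset_eq, List.mem_toFinset]
  exact List.mem_of_head? h.head?_eq

theorem getLast_mem (h : IsHamiltonianPath S u v l) : v ∈ S := by
  rw [← h.toFinset_eq, List.mem_toFinset]
  exact List.mem_of_getLast? h.getLast?_eq

theorem length_eq (h : IsHamiltonianPath S u v l) : l.length = S.card := by
  rw [← h.toFinset_eq, List.toFinset_card_of_nodup h.nodup]

theorem ne_of_one_lt_card (h : IsHamiltonianPath S u v l) (hS : 1 < S.card) : u ≠ v := by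
  obtain ⟨l, rfl⟩ := List.head?_eq_some_iff.1 h.head?_eq
  have hl : l ≠ [] := by
    rintro rfl
    exact hS.ne h.length_eq
  have hv : v ∈ l := by
    apply List.mem_of_getLast?
    rw [← List.getLast?_append_of_ne_nil [u] hl]
    exact h.getLast?_eq
  rintro rfl
  exact h.nodup.notMem hv

theorem append_cons (ha : IsHamiltonianPath X u t (a ++ [t]))
    (hb : IsHamiltonianPath Y t v (t :: b)) (hXY : X ∩ Y ⊆ {t}) :
    IsHamiltonianPath (X ∪ Y) u v (a ++ t :: b) where
  nodup := by
    have hdisj : ∀ x ∈ a ++ [t], x ∉ b := by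
      intro x hxa hxb
      have hxX : x ∈ X := by rwa [← ha.toFinset_eq, List.mem_toFinset]
      have hxY : x ∈ Y := by simp [← hb.toFinset_eq, hxb]
      obtain rfl : x = t := Finset.mem_singleton.1 (hXY (Finset.mem_inter.2 ⟨hxX, hxY⟩))
      exact hb.nodup.notMem hxb
    rw [List.append_cons]
    exact ha.nodup.append hb.nodup.of_cons hdisj
  toFinset_eq := by
    rw [← ha.toFinset_eq, ← hb.toFinset_eq]
    ext x
    simp only [List.mem_toFinset, List.mem_append, List.mem_cons, Finset.mem_union]
    tauto
  head?_eq := by simpa using ha.head?_eq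
  getLast?_eq := by simpa using hb.getLast?_eq

theorem of_append_cons_left (h : IsHamiltonianPath S u v (a ++ t :: b)) :
    IsHamiltonianPath (a ++ [t]).toFinset u t (a ++ [t]) where
  nodup := h.nodup.sublist (by simp)
  toFinset_eq := rfl
  head?_eq := by simpa using h.head?_eq
  getLast?_eq := List.getLast?_concat

theorem of_append_cons_right (h : IsHamiltonianPath S u v (a ++ t :: b)) :
    IsHamiltonianPath (S \ (a ++ [t]).toFinset ∪ {t}) t v (t :: b) where
  nodup := h.nodup.of_append_right
  toFinset_eq := by
    have hdisj : (a ++ [t]).Disjoint b :=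
      List.disjoint_of_nodup_append (List.append_cons a t b ▸ h.nodup)
    ext x
    have hx := @hdisj x
    simp only [← h.toFinset_eq, List.mem_toFinset, List.mem_append, List.mem_cons,
      List.not_mem_nil, Finset.mem_union, Finset.mem_sdiff, Finset.mem_singleton] at hx ⊢
    tauto
  head?_eq := rfl
  getLast?_eq := by simpa using h.getLast?_eq

theorem exists_split (h : IsHamiltonianPath S u v l) {k : ℕ} (hk : 0 < k) (hkS : k ≤ S.card) :
    ∃ X ⊆ S, X.card = k ∧ ∃ t a b, l = a ++ t :: b ∧
      IsHamiltonianPath X u t (a ++ [t]) ∧ IsHamiltonianPath (S \ X ∪ {t}) t v (t :: b) := by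
  have hlt : k - 1 < l.length := by have := h.length_eq; omega
  obtain ⟨a, t, b, rfl, ha⟩ : ∃ a t b, l = a ++ t :: b ∧ a.length = k - 1 :=
    ⟨l.take (k - 1), l[k - 1], l.drop (k - 1 + 1), by simp, by simp; omega⟩
  refine ⟨(a ++ [t]).toFinset, ?_, ?_, t, a, b, rfl,
    h.of_append_cons_left, h.of_append_cons_right⟩
  · rw [← h.toFinset_eq, List.append_cons a t b, List.toFinset_append (l' := b)]
    exact Finset.subset_union_left
  · rw [← h.of_append_cons_left.length_eq, List.length_append, ha, List.length_singleton]
    omega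

end IsHamiltonianPath

end HamiltonianPath

section MinPath

variable {α : Type*} [DecidableEq α] {w : α → α → ℕ∞} {S X Y : Finset α} {u v t : α} {l : List α}

theorem minPath_eq_iInf :
    minPath w S u v = ⨅ (l) (_ : IsHamiltonianPath S u v l), pathCost w l := by
  apply le_antisymm
  · exact le_iInf₂ fun l h =>
      sInf_le ⟨l, h.nodup, h.toFinset_eq, h.head?_eq, h.getLast?_eq, rfl⟩
  · refine le_sInf ?_
    rintro _ ⟨l, hnodup, hS, hu, hv, rfl⟩
    exact iInf₂_le l ⟨hnodup, hS, hu, hv⟩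

theorem le_minPath_iff {c : ℕ∞} :
    c ≤ minPath w S u v ↔ ∀ l, IsHamiltonianPath S u v l → c ≤ pathCost w l := by
  rw [minPath_eq_iInf, le_iInf₂_iff]

theorem minPath_le_pathCost (h : IsHamiltonianPath S u v l) : minPath w S u v ≤ pathCost w l :=
  le_minPath_iff.1 le_rfl l h

theorem minPath_union_le (hXY : X ∩ Y ⊆ {t}) :
    minPath w (X ∪ Y) u v ≤ minPath w X u t + minPath w Y t v := by
  rw [minPath_eq_iInf (S := X), minPath_eq_iInf (S := Y)]
  refine ENat.le_iInf₂_add_iInf₂ fun p hp q hq => ?_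
  obtain ⟨a, rfl⟩ := List.getLast?_eq_some_iff.1 hp.getLast?_eq
  obtain ⟨b, rfl⟩ := List.head?_eq_some_iff.1 hq.head?_eq
  rw [← pathCost_append_cons]
  exact minPath_le_pathCost (hp.append_cons hq hXY)

theorem minPath_le_add_of_mem (hXS : X ⊆ S) (ht : t ∈ X) :
    minPath w S u v ≤ minPath w X u t + minPath w (S \ X ∪ {t}) t v := by
  have hunion : X ∪ (S \ X ∪ {t}) = S := by grind
  have hinter : X ∩ (S \ X ∪ {t}) ⊆ {t} := by grind
  simpa only [hunion] using minPath_union_le (w := w) (u := u) (v := v) hinter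

theorem IsHamiltonianPath.exists_minPath_add_le (h : IsHamiltonianPath S u v l) {k : ℕ}
    (hk : 2 ≤ k) (hkS : k < S.card) :
    ∃ X ⊆ S, X.card = k ∧ u ∈ X ∧ v ∉ X ∧ ∃ t ∈ X.erase u,
      minPath w X u t + minPath w (S \ X ∪ {t}) t v ≤ pathCost w l := by
  obtain ⟨X, hXS, hXk, t, a, b, rfl, hX, hY⟩ := h.exists_split (by omega) hkS.le
  have hut : u ≠ t := hX.ne_of_one_lt_card (by omega)
  have hYcard : 1 < (S \ X ∪ {t}).card := by
    have htSX : t ∉ S \ X := fun ht => (Finset.mem_sdiff.1 ht).2 hX.getLast_mem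
    have hSX : 0 < (S \ X).card := by rw [Finset.card_sdiff_of_subset hXS]; omega
    rw [Finset.union_singleton, Finset.card_insert_of_notMem htSX]
    omega
  have htv : t ≠ v := hY.ne_of_one_lt_card hYcard
  have hvX : v ∉ X := by grind [hY.getLast_mem]
  refine ⟨X, hXS, hXk, hX.head_mem, hvX, t, Finset.mem_erase.2 ⟨hut.symm, hX.getLast_mem⟩, ?_⟩
  rw [pathCost_append_cons]
  exact add_le_add (minPath_le_pathCost hX) (minPath_le_pathCost hY)

end MinPath

/-- For `S ⊆ V`, distinct `u, v ∈ S` and `2 ≤ k ≤ |S| - 1`: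
`f(S,u,v) = min_{X ⊆ S, |X| = k, u ∈ X, v ∉ X} min_{t ∈ X∖{u}}
  ( f(X,u,t) + f((S∖X) ∪ {t}, t, v) )`. -/
theorem minPath_recurrence_split {α : Type*} [DecidableEq α]
    (w : α → α → ℕ∞) (S : Finset α) (u v : α)
    (hu : u ∈ S) (hv : v ∈ S) (huv : u ≠ v)
    (k : ℕ) (hk1 : 2 ≤ k) (hk2 : k ≤ S.card - 1) :
    minPath w S u v =
      (S.powerset.filter (fun X => X.card = k ∧ u ∈ X ∧ v ∉ X)).inf
        (fun X => (X.erase u).inf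
          (fun t => minPath w X u t + minPath w ((S \ X) ∪ {t}) t v)) := by
  apply le_antisymm
  · refine Finset.le_inf fun X hX => Finset.le_inf fun t ht => ?_
    have hXS : X ⊆ S := Finset.mem_powerset.1 (Finset.mem_filter.1 hX).1
    exact minPath_le_add_of_mem hXS (Finset.mem_of_mem_erase ht)
  · refine le_minPath_iff.2 fun l hl => ?_
    obtain ⟨X, hXS, hXk, huX, hvX, t, ht, hle⟩ :=
      hl.exists_minPath_add_le (w := w) hk1 (by omega : k < S.card)
    have hX : X ∈ S.powerset.filter (fun X => X.card = k ∧ u ∈ X ∧ v ∉ X) :=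
      Finset.mem_filter.2 ⟨Finset.mem_powerset.2 hXS, hXk, huX, hvX⟩
    exact (Finset.inf_le hX).trans ((Finset.inf_le ht).trans hle)
end

section
/- For every S ⊆ V and every integer k with 1 ≤ k ≤ |S| − 1: f(S) = min over all A ⊆ S with |A| = k of ( f(A) + f(S∖A) + |{(b,a) ∈ E : b ∈ S∖A, a ∈ A}| ). -/
/-- The induced edge set `E(S) = E ∩ (S × S)`. -/
def inducedEdges {α : Type*} [DecidableEq α] (E : Finset (α × α)) (S : Finset α) :
    Finset (α × α) :=
  E.filter (fun p => p.1 ∈ S ∧ p.2 ∈ S)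

/-- `fasNum E S` is the minimum cardinality of a set `F ⊆ E(S)` such that the
directed graph `(S, E(S) ∖ F)` is acyclic (its transitive closure is irreflexive):
the minimum feedback arc set size of the subgraph induced on `S`. -/
noncomputable def fasNum {α : Type*} [DecidableEq α]
    (E : Finset (α × α)) (S : Finset α) : ℕ :=
  sInf {m | ∃ F ⊆ inducedEdges E S,
    (∀ a : α, ¬ Relation.TransGen (fun u v => (u, v) ∈ inducedEdges E S \ F) a a) ∧
    F.card = m}

/-!
Deleting feedback arc sets of `A` and of `B` together with all edges from `B` to `A` makes `A ∪ B`
acyclic, since a closed walk can then never leave `B` once it has entered it; this gives `≤`.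
For `≥`, delete an optimal feedback arc set `F` of `S` and let `A` be the first `k` vertices of a
topological order of what remains. Every edge from `S \ A` to `A` then lies in `F`, and the rest
of `F` splits into disjoint feedback arc sets of `A` and `S \ A`.
-/

open Finset Relation

section AcyclicRel

variable {α : Type*} {r s : α → α → Prop}

/-- A relation is acyclic if, viewed as the edge relation of a directed graph, it has no directed
cycle. Loops count as cycles. -/
def AcyclicRel (r : α → α → Prop) : Prop :=
  ∀ a, ¬ TransGen r a a

theorem AcyclicRel.mono (hs : AcyclicRel s) (hrs : r ≤ s) : AcyclicRel r :=
  fun a ha ↦ hs a (TransGen.mono hrs a a ha)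

theorem acyclicRel_of_forall_not (hr : ∀ u v, ¬ r u v) : AcyclicRel r := by
  intro a ha
  obtain ⟨b, hab, -⟩ := TransGen.head'_iff.1 ha
  exact hr a b hab

theorem transGen_and_of_closed {p : α → Prop} (hp : ∀ u v, r u v → p u → p v) {a b : α}
    (ha : p a) (hab : TransGen r a b) : TransGen (fun u v ↦ r u v ∧ p u ∧ p v) a b := by
  suffices h : TransGen (fun u v ↦ r u v ∧ p u ∧ p v) a b ∧ p b from h.1
  induction hab with
  | single hab => exact ⟨.single ⟨hab, ha, hp _ _ hab ha⟩, hp _ _ hab ha⟩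
  | tail _ hbc ih => exact ⟨ih.1.tail ⟨hbc, ih.2, hp _ _ hbc ih.2⟩, hp _ _ hbc ih.2⟩

theorem AcyclicRel.of_closed {p : α → Prop} (hp : ∀ u v, r u v → p u → p v)
    (h_in : AcyclicRel fun u v ↦ r u v ∧ p u ∧ p v)
    (h_out : AcyclicRel fun u v ↦ r u v ∧ ¬ p u ∧ ¬ p v) : AcyclicRel r := by
  intro a ha
  by_cases hpa : p a
  · exact h_in a (transGen_and_of_closed hp hpa ha)
  · have h_rev : TransGen (fun u v ↦ r v u ∧ ¬ p u ∧ ¬ p v) a a :=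
      transGen_and_of_closed (fun u v hvu hpu hpv ↦ hpu (hp v u hvu hpv)) hpa (transGen_swap.2 ha)
    exact h_out a (TransGen.mono (fun _ _ h ↦ ⟨h.1, h.2.2, h.2.1⟩) a a (transGen_swap.2 h_rev))

theorem AcyclicRel.exists_mem_forall_not_rel (hr : AcyclicRel r) {S : Finset α}
    (hS : S.Nonempty) : ∃ x ∈ S, ∀ u ∈ S, ¬ r u x := by
  have : IsStrictOrder α (TransGen r) := { irrefl := hr, trans := fun _ _ _ ↦ TransGen.trans }
  have : Nonempty (S : Set α) := hS.to_subtype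
  obtain ⟨x, -, hx⟩ := (S.wellFoundedOn (r := TransGen r)).has_min Set.univ Set.univ_nonempty
  exact ⟨x, x.2, fun u hu hux ↦ hx ⟨u, hu⟩ trivial (.single hux)⟩

theorem AcyclicRel.exists_subset_card_eq_forall_not_rel [DecidableEq α] (hr : AcyclicRel r)
    (S : Finset α) {k : ℕ} (hk : k ≤ #S) :
    ∃ A ⊆ S, #A = k ∧ ∀ u ∈ S \ A, ∀ v ∈ A, ¬ r u v := by
  induction k with
  | zero => exact ⟨∅, by simp⟩
  | succ k ih =>
    obtain ⟨A, hAS, hAk, hA⟩ := ih (by lia)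
    have h_rest : (S \ A).Nonempty := sdiff_nonempty_of_card_lt_card (by lia)
    obtain ⟨x, hx, hx_min⟩ := hr.exists_mem_forall_not_rel h_rest
    obtain ⟨hxS, hxA⟩ := mem_sdiff.1 hx
    refine ⟨insert x A, insert_subset hxS hAS, by rw [card_insert_of_notMem hxA, hAk], ?_⟩
    intro u hu v hv
    have hu' : u ∈ S \ A := sdiff_subset_sdiff subset_rfl (subset_insert x A) hu
    obtain rfl | hvA := mem_insert.1 hv
    · exact hx_min u hu'
    · exact hA u hu' v hvA

end AcyclicRel

section FeedbackArcSet

variable {α : Type*} [DecidableEq α] {E F F₁ F₂ : Finset (α × α)} {A B S T : Finset α}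

/-- The edges of `E` with source in `B` and target in `A`. -/
def edgesFromTo (E : Finset (α × α)) (B A : Finset α) : Finset (α × α) :=
  E.filter fun p ↦ p.1 ∈ B ∧ p.2 ∈ A

/-- `F` is a feedback arc set of the subgraph of `E` induced on `S`: a set of edges of this
subgraph whose deletion makes it acyclic. These are the sets over which `fasNum E S` minimizes the
cardinality. -/
structure IsFeedbackArcSet (E : Finset (α × α)) (S : Finset α) (F : Finset (α × α)) : Prop where
  subset_inducedEdges : F ⊆ inducedEdges E S
  acyclicRel : AcyclicRel fun u v ↦ (u, v) ∈ inducedEdges E S \ F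

theorem isFeedbackArcSet_inducedEdges (E : Finset (α × α)) (S : Finset α) :
    IsFeedbackArcSet E S (inducedEdges E S) :=
  ⟨subset_rfl, acyclicRel_of_forall_not (by simp)⟩

theorem fasNum_eq_sInf (E : Finset (α × α)) (S : Finset α) :
    fasNum E S = sInf {m | ∃ F, IsFeedbackArcSet E S F ∧ #F = m} := by
  refine congrArg sInf (Set.ext fun m ↦ ⟨?_, ?_⟩)
  · rintro ⟨F, hFS, hF, hFm⟩
    exact ⟨F, ⟨hFS, hF⟩, hFm⟩
  · rintro ⟨F, hF, hFm⟩
    exact ⟨F, hF.subset_inducedEdges, hF.acyclicRel, hFm⟩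

theorem IsFeedbackArcSet.fasNum_le_card (hF : IsFeedbackArcSet E S F) : fasNum E S ≤ #F :=
  fasNum_eq_sInf E S ▸ Nat.sInf_le ⟨F, hF, rfl⟩

theorem exists_isFeedbackArcSet_card_eq_fasNum (E : Finset (α × α)) (S : Finset α) :
    ∃ F, IsFeedbackArcSet E S F ∧ #F = fasNum E S := by
  rw [fasNum_eq_sInf]
  exact Nat.sInf_mem (s := {m | ∃ F, IsFeedbackArcSet E S F ∧ #F = m})
    ⟨_, _, isFeedbackArcSet_inducedEdges E S, rfl⟩

theorem IsFeedbackArcSet.inter_inducedEdges (hF : IsFeedbackArcSet E S F) (hTS : T ⊆ S) :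
    IsFeedbackArcSet E T (F ∩ inducedEdges E T) := by
  refine ⟨inter_subset_right, hF.acyclicRel.mono fun u v huv ↦ ?_⟩
  simp only [inducedEdges, mem_sdiff, mem_inter, mem_filter] at huv ⊢
  exact ⟨⟨huv.1.1, hTS huv.1.2.1, hTS huv.1.2.2⟩, fun huvF ↦ huv.2 ⟨huvF, huv.1⟩⟩

theorem IsFeedbackArcSet.union (hA : IsFeedbackArcSet E A F₁) (hB : IsFeedbackArcSet E B F₂) :
    IsFeedbackArcSet E (A ∪ B) (F₁ ∪ F₂ ∪ edgesFromTo E B A) where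
  subset_inducedEdges := by
    have hF₁ := hA.subset_inducedEdges
    have hF₂ := hB.subset_inducedEdges
    grind [inducedEdges, edgesFromTo]
  acyclicRel := by
    refine AcyclicRel.of_closed (p := (· ∈ B)) ?_ (hB.acyclicRel.mono ?_) (hA.acyclicRel.mono ?_)
    all_goals
      intro u v
      simp only [inducedEdges, edgesFromTo, mem_sdiff, mem_union, mem_filter, le_Prop_eq]
      tauto

theorem fasNum_union_le (E : Finset (α × α)) (A B : Finset α) :
    fasNum E (A ∪ B) ≤ fasNum E A + fasNum E B + #(edgesFromTo E B A) := by
  obtain ⟨F₁, hF₁, hF₁_card⟩ := exists_isFeedbackArcSet_card_eq_fasNum E A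
  obtain ⟨F₂, hF₂, hF₂_card⟩ := exists_isFeedbackArcSet_card_eq_fasNum E B
  calc fasNum E (A ∪ B)
      ≤ #(F₁ ∪ F₂ ∪ edgesFromTo E B A) := (hF₁.union hF₂).fasNum_le_card
    _ ≤ #(F₁ ∪ F₂) + #(edgesFromTo E B A) := card_union_le _ _
    _ ≤ #F₁ + #F₂ + #(edgesFromTo E B A) := by gcongr; exact card_union_le _ _
    _ = fasNum E A + fasNum E B + #(edgesFromTo E B A) := by rw [hF₁_card, hF₂_card]

theorem disjoint_inducedEdges (E : Finset (α × α)) (hAB : Disjoint A B) :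
    Disjoint (inducedEdges E A) (inducedEdges E B) :=
  disjoint_filter.2 fun _ _ hA hB ↦ disjoint_left.1 hAB hA.1 hB.1

theorem disjoint_inducedEdges_union_edgesFromTo (E : Finset (α × α)) (hAB : Disjoint A B) :
    Disjoint (inducedEdges E A ∪ inducedEdges E B) (edgesFromTo E B A) :=
  disjoint_union_left.2
    ⟨disjoint_filter.2 fun _ _ hA hBA ↦ disjoint_left.1 hAB hA.1 hBA.1,
      disjoint_filter.2 fun _ _ hB hBA ↦ disjoint_left.1 hAB hBA.2 hB.2⟩

theorem IsFeedbackArcSet.fasNum_add_le_card (hF : IsFeedbackArcSet E S F) (hAS : A ⊆ S)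
    (hBS : B ⊆ S) (hAB : Disjoint A B) (hBA : edgesFromTo E B A ⊆ F) :
    fasNum E A + fasNum E B + #(edgesFromTo E B A) ≤ #F := by
  have h_disj : Disjoint (F ∩ inducedEdges E A) (F ∩ inducedEdges E B) :=
    (disjoint_inducedEdges E hAB).mono inter_subset_right inter_subset_right
  have h_disj' : Disjoint (F ∩ inducedEdges E A ∪ F ∩ inducedEdges E B) (edgesFromTo E B A) :=
    (disjoint_inducedEdges_union_edgesFromTo E hAB).mono_left
      (union_subset_union inter_subset_right inter_subset_right)
  calc fasNum E A + fasNum E B + #(edgesFromTo E B A)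
      ≤ #(F ∩ inducedEdges E A) + #(F ∩ inducedEdges E B) + #(edgesFromTo E B A) := by
        gcongr
        · exact (hF.inter_inducedEdges hAS).fasNum_le_card
        · exact (hF.inter_inducedEdges hBS).fasNum_le_card
    _ = #(F ∩ inducedEdges E A ∪ F ∩ inducedEdges E B ∪ edgesFromTo E B A) := by
        rw [card_union_of_disjoint h_disj', card_union_of_disjoint h_disj]
    _ ≤ #F :=
        card_le_card (union_subset (union_subset inter_subset_left inter_subset_left) hBA)

theorem IsFeedbackArcSet.exists_subset_card_eq_edgesFromTo_subset (hF : IsFeedbackArcSet E S F)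
    {k : ℕ} (hk : k ≤ #S) : ∃ A ⊆ S, #A = k ∧ edgesFromTo E (S \ A) A ⊆ F := by
  obtain ⟨A, hAS, hAk, hA⟩ := hF.acyclicRel.exists_subset_card_eq_forall_not_rel S hk
  refine ⟨A, hAS, hAk, fun ⟨u, v⟩ huv ↦ ?_⟩
  obtain ⟨huvE, hu, hv⟩ := mem_filter.1 huv
  have huvS : (u, v) ∈ inducedEdges E S := mem_filter.2 ⟨huvE, sdiff_subset hu, hAS hv⟩
  by_contra huvF
  exact hA u hu v hv (mem_sdiff.2 ⟨huvS, huvF⟩)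

theorem exists_subset_card_eq_fasNum_add_le (E : Finset (α × α)) {k : ℕ} (hk : k ≤ #S) :
    ∃ A ⊆ S, #A = k ∧
      fasNum E A + fasNum E (S \ A) + #(edgesFromTo E (S \ A) A) ≤ fasNum E S := by
  obtain ⟨F, hF, hF_card⟩ := exists_isFeedbackArcSet_card_eq_fasNum E S
  obtain ⟨A, hAS, hAk, hAF⟩ := hF.exists_subset_card_eq_edgesFromTo_subset hk
  exact ⟨A, hAS, hAk, hF_card ▸ hF.fasNum_add_le_card hAS sdiff_subset disjoint_sdiff hAF⟩

end FeedbackArcSet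

/-- For `S ⊆ V` and `1 ≤ k ≤ |S| - 1`:
`f(S) = min_{A ⊆ S, |A| = k} ( f(A) + f(S∖A) + |{(b,a) ∈ E : b ∈ S∖A, a ∈ A}| )`. -/
theorem fasNum_recurrence {α : Type*} [DecidableEq α]
    (E : Finset (α × α)) (S : Finset α) (k : ℕ)
    (hk1 : 1 ≤ k) (hk2 : k ≤ S.card - 1) :
    fasNum E S =
      sInf {m | ∃ A ⊆ S, A.card = k ∧
        m = fasNum E A + fasNum E (S \ A) +
          (E.filter (fun p => p.1 ∈ S \ A ∧ p.2 ∈ A)).card} := by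
  have h_le : ∀ A ⊆ S,
      fasNum E S ≤ fasNum E A + fasNum E (S \ A) + #(edgesFromTo E (S \ A) A) := by
    intro A hAS
    simpa only [union_sdiff_of_subset hAS] using fasNum_union_le E A (S \ A)
  obtain ⟨A, hAS, hAk, hA⟩ := exists_subset_card_eq_fasNum_add_le (S := S) E (k := k) (by lia)
  symm
  refine IsLeast.csInf_eq ⟨⟨A, hAS, hAk, (h_le A hAS).antisymm hA⟩, ?_⟩
  rintro _ ⟨B, hBS, -, rfl⟩
  exact h_le B hBS
end

section
/- Let T be a rooted tree on a finite vertex set V with |V| = n ≥ 1, root r, and parent function p. Then the number of valid pairs (s, S), where s : V∖{r} → {−1, 0, +1} and S ⊆ V, is at most 2 · 5^{n−1}. -/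
/-!
Process the tree from the root downwards: once the membership of the parent of `v` in `S` is known,
exactly one of the six values of the pair (sign of `v`, membership of `v`) is forbidden. So a valid
pair is determined by the membership of the root, together with one of five choices at every other
vertex.
-/

theorem forall_of_root_of_parent {V : Type*} {r : V} {p : V → V}
    (htree : ∀ v, ∃ k : ℕ, p^[k] v = r) {P : V → Prop} (root : P r)
    (step : ∀ v, v ≠ r → P (p v) → P v) (v : V) : P v := by
  obtain ⟨k, hk⟩ := htree v
  induction k generalizing v with
  | zero =>
    obtain rfl : v = r := hk
    exact root
  | succ k ih =>
    by_cases hv : v = r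
    · exact hv ▸ root
    · exact step v hv (ih (p v) hk)

section Labelling

variable {V A B : Type*} {r : V}

/-- An edge labelling `s` and a vertex labelling `ℓ` of the tree with root `r` and parent function
`p` are compatible if at each non-root vertex `v` the pair `(s v, ℓ v)` is among those that
`allowed v` permits for the label of the parent. The edge from `v` to `p v` is
represented by `v`. -/
def IsCompatible (p : V → V) (allowed : {v // v ≠ r} → A → Set (B × A))
    (q : ({v // v ≠ r} → B) × (V → A)) : Prop :=
  ∀ v : {v // v ≠ r}, (q.1 v, q.2 v) ∈ allowed v (q.2 (p v))

variable {p : V → V} {allowed : {v // v ≠ r} → A → Set (B × A)} {C : {v // v ≠ r} → Type*}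

/-- The top-down encoding of a compatible pair of labellings: the label of the root, and at each
other vertex a code in `C v` for the pair chosen there among those permitted by the parent. -/
def encode (code : ∀ v a, allowed v a → C v) (q : {q // IsCompatible p allowed q}) :
    A × ∀ v, C v :=
  (q.1.2 r, fun v => code v (q.1.2 (p v)) ⟨(q.1.1 v, q.1.2 v), q.2 v⟩)

theorem encode_injective (htree : ∀ v, ∃ k : ℕ, p^[k] v = r) {code : ∀ v a, allowed v a → C v}
    (hcode : ∀ v a, (code v a).Injective) :
    (encode (p := p) code).Injective := by
  rintro ⟨⟨s, ℓ⟩, hq⟩ ⟨⟨s', ℓ'⟩, hq'⟩ h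
  obtain ⟨hroot, hcodes⟩ := Prod.mk.inj h
  have pair_eq (v : {v // v ≠ r}) (hparent : ℓ (p v) = ℓ' (p v)) :
      (s v, ℓ v) = (s' v, ℓ' v) := by
    have cancel {a a' : A} (ha : a = a') (x : allowed v a) (x' : allowed v a')
        (hx : code v a x = code v a' x') : (x : B × A) = x' := by
      subst ha
      exact congrArg Subtype.val (hcode v a hx)
    exact cancel hparent ⟨_, hq v⟩ ⟨_, hq' v⟩ (congrFun hcodes v)
  have label_eq : ∀ v, ℓ v = ℓ' v :=
    forall_of_root_of_parent htree hroot fun v hv hparent =>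
      congrArg Prod.snd (pair_eq ⟨v, hv⟩ hparent)
  have edge_eq : ∀ v, s v = s' v := fun v => congrArg Prod.fst (pair_eq v (label_eq _))
  exact Subtype.ext (Prod.ext (funext edge_eq) (funext label_eq))

theorem card_isCompatible_le [Finite A] [Finite B] [Fintype {v // v ≠ r}]
    (htree : ∀ v, ∃ k : ℕ, p^[k] v = r) {k : {v // v ≠ r} → ℕ}
    (hk : ∀ v a, (allowed v a).ncard ≤ k v) :
    Nat.card {q // IsCompatible p allowed q} ≤ Nat.card A * ∏ v, k v := by
  let code (v : {v // v ≠ r}) (a : A) (x : allowed v a) : Fin (k v) :=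
    Fin.castLE (hk v a) (Finite.equivFin (allowed v a) x)
  have hcode (v : {v // v ≠ r}) (a : A) : (code v a).Injective :=
    (Fin.castLE_injective (hk v a)).comp (Finite.equivFin (allowed v a)).injective
  calc Nat.card {q // IsCompatible p allowed q}
      ≤ Nat.card (A × ∀ v, Fin (k v)) :=
        Nat.card_le_card_of_injective (encode code) (encode_injective htree hcode)
    _ = Nat.card A * ∏ v, k v := by simp only [Nat.card_prod, Nat.card_pi, Nat.card_fin]

end Labelling

/-- The signs `{-1, 0, +1}`, as a subtype of `ℤ`. -/
abbrev Sign : Type := {x : ℤ // x = -1 ∨ x = 0 ∨ x = 1}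

theorem card_sign : Nat.card Sign = 3 :=
  Nat.subtype_card ({-1, 0, 1} : Finset ℤ) (by simp)

instance : Finite Sign := Nat.finite_of_card_ne_zero (by simp [card_sign])

/-- The pairs (sign of `v`, membership of `v` in `S`) that validity permits at a non-root vertex
`v`, where `a` is the membership of its parent in `S`. Memberships are encoded as propositions. -/
def validChoices (a : Prop) : Set (Sign × Prop) :=
  {x | ¬(a ∧ (x.1 : ℤ) = 1 ∧ ¬x.2) ∧ ¬(¬a ∧ (x.1 : ℤ) = -1 ∧ x.2)}

theorem exists_validChoices_eq_compl_singleton (a : Prop) : ∃ x, validChoices a = {x}ᶜ := by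
  by_cases ha : a
  · refine ⟨(⟨1, by simp⟩, False), ?_⟩
    ext ⟨x, c⟩
    simp [validChoices, ha, Subtype.ext_iff]
  · refine ⟨(⟨-1, by simp⟩, True), ?_⟩
    ext ⟨x, c⟩
    simp [validChoices, ha, Subtype.ext_iff]

theorem ncard_validChoices (a : Prop) : (validChoices a).ncard = 5 := by
  obtain ⟨x, hx⟩ := exists_validChoices_eq_compl_singleton a
  rw [hx, Set.ncard_compl, Set.ncard_singleton, Nat.card_prod, card_sign,
    Nat.card_eq_fintype_card, Fintype.card_prop]

/-- Let `T` be a rooted tree on a finite vertex set `V` with `|V| = n ≥ 1`, root `r`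
and parent function `p` (every vertex reaches `r` by iterating `p`). Then the number
of valid pairs `(s, S)` with `s : V∖{r} → {-1, 0, +1}` and `S ⊆ V` is at most
`2 · 5^(n-1)`, where `(s, S)` is valid if for every `v ≠ r` it is not the case that
`p(v) ∈ S`, `s(v) = +1` and `v ∉ S`, and not the case that `p(v) ∉ S`, `s(v) = -1`
and `v ∈ S`. -/
theorem card_valid_pairs_le {V : Type*} [Fintype V]
    (n : ℕ) (hn : n = Fintype.card V) (hn1 : 1 ≤ n)
    (r : V) (p : V → V) (htree : ∀ v : V, ∃ k : ℕ, p^[k] v = r) :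
    Nat.card {q : ({v : V // v ≠ r} → {x : ℤ // x = -1 ∨ x = 0 ∨ x = 1}) × Finset V //
        ∀ v : {v : V // v ≠ r},
          ¬(p v.1 ∈ q.2 ∧ (q.1 v : ℤ) = 1 ∧ v.1 ∉ q.2) ∧
          ¬(p v.1 ∉ q.2 ∧ (q.1 v : ℤ) = -1 ∧ v.1 ∈ q.2)} ≤ 2 * 5 ^ (n - 1) := by
  classical
  let memberships : ({v : V // v ≠ r} → Sign) × Finset V → ({v : V // v ≠ r} → Sign) × (V → Prop) :=
    Prod.map id fun S v => v ∈ S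
  have memberships_injective : memberships.Injective :=
    Function.injective_id.prodMap Finset.coe_injective
  have card_nonroot : Fintype.card {v : V // v ≠ r} = n - 1 := by
    rw [hn]
    exact Set.card_ne_eq r
  calc
    _ ≤ Nat.card {q // IsCompatible p (fun _ : {v : V // v ≠ r} => validChoices) q} :=
      Nat.card_le_card_of_injective (Subtype.map memberships fun _ hq => hq)
        (Subtype.map_injective _ memberships_injective)
    _ ≤ Nat.card Prop * ∏ _ : {v : V // v ≠ r}, 5 :=
      card_isCompatible_le htree fun _ a => (ncard_validChoices a).le
    _ = 2 * 5 ^ (n - 1) := by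
      rw [Nat.card_eq_fintype_card, Fintype.card_prop, Finset.prod_const, Finset.card_univ,
        card_nonroot]
end
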